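/- Let ℓ be a prime dividing q − 1, let ζ ∈ 𝔽_q be a primitive ℓ-th root of unity, let a ≥ 1 be an integer, and let α ∈ 𝔽̄_q be nonzero with σ^{ℓ^{a−1}}(α) = ζ·α. Then α has degree ℓ^a over 𝔽_q, and α^ℓ has degree ℓ^{a−1} over 𝔽_q. -/

import Mathlib

/-!
Write `q = |F|` and `σ` for the `q`-power Frobenius. The degree of `β` over `F` divides `n` if and
only if `σ^n β = β` (`finrank_adjoin_dvd_iff`). If `σ^m x = η x` with `η` fixed by `σ`, then
`σ^{mk} x = η^k x` (`iterate_eigen`).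

For `α`, this gives `σ^{ℓ^a} α = ζ^ℓ α = α` whereas `σ^{ℓ^{a-1}} α = ζ α ≠ α`, so the degree divides
`ℓ^a` but not `ℓ^{a-1}`, and is `ℓ^a`.

For `α^ℓ`, of degree `d`, the relation `σ^{ℓ^{a-1}} α^ℓ = ζ^ℓ α^ℓ = α^ℓ` gives `d ∣ ℓ^{a-1}`.
Conversely `σ^d α = η α` with `η^ℓ = 1`; as `ℓ ∣ q - 1`, `η` is fixed by `σ`, so `σ^{dℓ} α = α`, whence
`ℓ^a ∣ dℓ` and `ℓ^{a-1} ∣ d`.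
-/

lemma finrank_adjoin_dvd_iff {F K : Type} [Field F] [Fintype F] [Field K] [Algebra F K]
    [Algebra.IsAlgebraic F K] (β : K) (n : ℕ) :
    Module.finrank F (IntermediateField.adjoin F {β}) ∣ n ↔ β ^ Fintype.card F ^ n = β := by
  have hβ : IsIntegral F β := Algebra.IsIntegral.isIntegral β
  rw [IntermediateField.adjoin.finrank hβ,
    (minpoly.irreducible hβ).natDegree_dvd_iff_dvd_X_pow_card_pow_sub_X, minpoly.dvd_iff]
  simp [sub_eq_zero]

lemma iterate_eigen {K : Type} [Field K] {q m : ℕ} {x η : K} (hη : η ^ q = η)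
    (hx : x ^ q ^ m = η * x) (k : ℕ) : x ^ q ^ (m * k) = η ^ k * x := by
  have hfix : ∀ n : ℕ, η ^ q ^ n = η := by
    intro n
    induction n with
    | zero => simp
    | succ n ih => rw [pow_succ, pow_mul, ih, hη]
  induction k with
  | zero => simp
  | succ k ih =>
    rw [Nat.mul_succ, pow_add, pow_mul, ih, mul_pow, hx, ← pow_mul, mul_comm k, pow_mul, hfix]
    ring

/-- Let `ℓ` be a prime dividing `q - 1` (`q = |F|`), `ζ ∈ F` a primitive
`ℓ`-th root of unity, `a ≥ 1`, and `α` a nonzero element of the algebraic closure `K` of `F`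
with `σ^{ℓ^{a-1}}(α) = ζ·α`.  Then `α` has degree `ℓ^a` over `F` and `α^ℓ` has degree
`ℓ^{a-1}` over `F`. -/
theorem stmt_8 (F K : Type) [Field F] [Fintype F] [Field K] [Algebra F K] [IsAlgClosure F K]
    (ℓ : ℕ) (hℓ : ℓ.Prime) (hℓq : ℓ ∣ Fintype.card F - 1)
    (ζ : F) (hζ : IsPrimitiveRoot ζ ℓ)
    (a : ℕ) (ha : 1 ≤ a)
    (α : K) (hα0 : α ≠ 0)
    (hαζ : α ^ Fintype.card F ^ ℓ ^ (a - 1) = algebraMap F K ζ * α) :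
    Module.finrank F (IntermediateField.adjoin F {α}) = ℓ ^ a ∧
      Module.finrank F (IntermediateField.adjoin F {α ^ ℓ}) = ℓ ^ (a - 1) := by
  have halg : Algebra.IsAlgebraic F K := IsAlgClosure.isAlgebraic
  obtain ⟨b, rfl⟩ : ∃ b, a = b + 1 := ⟨a - 1, by omega⟩
  simp only [Nat.add_sub_cancel] at hαζ ⊢
  have hfix : ∀ η : K, η ^ ℓ = 1 → η ^ Fintype.card F = η := by
    intro η hη
    obtain ⟨c, hc⟩ := hℓq
    have hq : Fintype.card F = ℓ * c + 1 := by
      have := Fintype.card_pos (α := F)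
      omega
    rw [hq, pow_succ, pow_mul, hη, one_pow, one_mul]
  have hζℓ : algebraMap F K ζ ^ ℓ = 1 := by rw [← map_pow, hζ.pow_eq_one, map_one]
  have hdeg : Module.finrank F (IntermediateField.adjoin F {α}) = ℓ ^ (b + 1) := by
    have h1 : Module.finrank F (IntermediateField.adjoin F {α}) ∣ ℓ ^ (b + 1) := by
      rw [finrank_adjoin_dvd_iff, pow_succ, iterate_eigen (hfix _ hζℓ) hαζ, hζℓ, one_mul]
    have h2 : ¬ Module.finrank F (IntermediateField.adjoin F {α}) ∣ ℓ ^ b := by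
      rw [finrank_adjoin_dvd_iff, hαζ, mul_eq_right₀ hα0, map_eq_one_iff _ (algebraMap F K).injective]
      exact hζ.ne_one hℓ.one_lt
    exact Nat.eq_prime_pow_of_dvd_least_prime_pow hℓ h2 h1
  refine ⟨hdeg, Nat.dvd_antisymm ?_ ?_⟩
  · rw [finrank_adjoin_dvd_iff, ← pow_mul, mul_comm, pow_mul, hαζ, mul_pow, hζℓ, one_mul]
  · set d := Module.finrank F (IntermediateField.adjoin F {α ^ ℓ}) with hd
    have hβ : (α ^ ℓ) ^ Fintype.card F ^ d = α ^ ℓ := (finrank_adjoin_dvd_iff _ _).1 dvd_rfl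
    have hη : (α ^ Fintype.card F ^ d / α) ^ ℓ = 1 := by
      rw [div_pow, ← pow_mul, mul_comm, pow_mul, hβ, div_self (pow_ne_zero _ hα0)]
    have h := iterate_eigen (m := d) (hfix _ hη) (div_mul_cancel₀ _ hα0).symm ℓ
    rw [hη, one_mul, ← finrank_adjoin_dvd_iff, hdeg, pow_succ] at h
    exact Nat.dvd_of_mul_dvd_mul_right hℓ.pos h
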